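/- For every τ₀ > 0 there exists a constant C₀ ∈ (0,1] such that for every continuous nonnegative function φ : [0,∞) → ℝ and all t > 0 and r > τ₀/2 with |t − r| > τ₀/8: I(t,r,φ) ≥ (C₀/√(sinh r)) ∫_{|t−r|}^{t+r} φ(λ) √(sinh λ) dλ. -/

import Mathlib

open MeasureTheory intervalIntegral

/-- The radial form, at geodesic radius `r` and time `t`, of the solution of the shifted
wave equation on the hyperbolic plane with data `u(0) = 0`, `∂ₜu(0) = φ`. -/
noncomputable def Isol (t r : ℝ) (φ : ℝ → ℝ) : ℝ :=
  (1 / (Real.pi * Real.sqrt 2)) *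
    ∫ s in (0 : ℝ)..t, ∫ l in |r - s|..(r + s),
      φ l * Real.sinh l * Real.sinh s *
        ((Real.cosh t - Real.cosh s) * (Real.cosh (r + s) - Real.cosh l) *
          (Real.cosh l - Real.cosh (r - s))) ^ (-(1 / 2) : ℝ)

/-!
Fubini turns `Isol t r φ` into an integral of `φ` against a positive kernel. For
`|t - r| < l < t + r` the variable `s` runs over `(|r - l|, t)`, and by the symmetry
`(cosh (r + s) - cosh l)(cosh l - cosh (r - s)) = (cosh (r + l) - cosh s)(cosh s - cosh (r - l))`
the only factor of the integrand besides an arcsine density in the variable `cosh s` is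
`cosh (r + l) - cosh s ≤ 2 sinh r sinh l`. Since the arcsine density has mass `π` on every
interval, the lower bound holds with the constant `1 / 2`, uniformly in `t` and `r`. The `l`
integral for fixed `s` is an arcsine integral too, so the kernel is integrable and Fubini applies.
-/

lemma memLp_top_restrict_of_continuousOn_of_isCompact {X E : Type*} [TopologicalSpace X]
    [MeasurableSpace X] [OpensMeasurableSpace X] [T2Space X] [NormedAddCommGroup E]
    {μ : Measure X} {f : X → E} {K : Set X} (hf : ContinuousOn f K) (hK : IsCompact K) :
    MemLp f ⊤ (μ.restrict K) := by
  obtain ⟨C, hC⟩ := hK.exists_bound_of_continuousOn hf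
  exact memLp_top_of_bound (hf.aestronglyMeasurable_of_isCompact hK hK.measurableSet) C
    (ae_restrict_of_forall_mem hK.measurableSet hC)

section ArcsineIntegral

open Real Set

/-- The density `1 / √((b - x)(x - a))` of the arcsine law on `(a, b)`, not normalised:
its total mass is `π`. -/
noncomputable def arcsineDensity (a b x : ℝ) : ℝ :=
  (√((b - x) * (x - a)))⁻¹

lemma arcsineDensity_nonneg (a b x : ℝ) : 0 ≤ arcsineDensity a b x := by
  unfold arcsineDensity
  positivity

lemma hasDerivAt_arcsin_affine {a b x : ℝ} (hx : x ∈ Ioo a b) :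
    HasDerivAt (fun y => arcsin ((2 * y - a - b) / (b - a))) (arcsineDensity a b x) x := by
  obtain ⟨hax, hxb⟩ := hx
  have hab : 0 < b - a := by linarith
  have hprod : 0 < (b - x) * (x - a) := mul_pos (by linarith) (by linarith)
  have hinner : HasDerivAt (fun y => (2 * y - a - b) / (b - a)) (2 * 1 / (b - a)) x :=
    ((((hasDerivAt_id x).const_mul 2).sub_const a).sub_const b).div_const (b - a)
  have harcsin := hasDerivAt_arcsin (x := (2 * x - a - b) / (b - a))
    (by rw [ne_eq, div_eq_iff hab.ne']; intro h; linarith)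
    (by rw [ne_eq, div_eq_iff hab.ne']; intro h; linarith)
  have hsqrt : √(1 - ((2 * x - a - b) / (b - a)) ^ 2) = 2 / (b - a) * √((b - x) * (x - a)) := by
    rw [← sqrt_sq (by positivity : 0 ≤ 2 / (b - a)), ← sqrt_mul (by positivity)]
    congr 1
    field_simp
    ring
  refine (harcsin.comp x hinner).congr_deriv ?_
  have := sqrt_pos.2 hprod
  rw [hsqrt, arcsineDensity]
  field_simp

variable {u u' : ℝ → ℝ} {p q : ℝ}

lemma integrableOn_arcsineDensity_comp_mul_deriv
    (hu : ContinuousOn u (Icc p q)) (hu' : ∀ s ∈ Ioo p q, HasDerivAt u (u' s) s)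
    (hu'_nonneg : ∀ s ∈ Ioo p q, 0 ≤ u' s) (hmaps : MapsTo u (Ioo p q) (Ioo (u p) (u q))) :
    IntegrableOn (fun s => arcsineDensity (u p) (u q) (u s) * u' s) (Ioc p q) :=
  integrableOn_deriv_of_nonneg
    (g := fun s => arcsin ((2 * u s - u p - u q) / (u q - u p))) (by fun_prop)
    (fun s hs => (hasDerivAt_arcsin_affine (hmaps hs)).comp s (hu' s hs))
    fun s hs => mul_nonneg (arcsineDensity_nonneg _ _ _) (hu'_nonneg s hs)

lemma integral_arcsineDensity_comp_mul_deriv (hpq : p < q)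
    (hu : ContinuousOn u (Icc p q)) (hu' : ∀ s ∈ Ioo p q, HasDerivAt u (u' s) s)
    (hu'_nonneg : ∀ s ∈ Ioo p q, 0 ≤ u' s) (hmaps : MapsTo u (Ioo p q) (Ioo (u p) (u q))) :
    ∫ s in p..q, arcsineDensity (u p) (u q) (u s) * u' s = π := by
  obtain ⟨c, hc⟩ := nonempty_Ioo.2 hpq
  have hlt : 0 < u q - u p := sub_pos.2 ((hmaps hc).1.trans (hmaps hc).2)
  have hright : (2 * u q - u p - u q) / (u q - u p) = 1 := by
    rw [div_eq_one_iff_eq hlt.ne']; ring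
  have hleft : (2 * u p - u p - u q) / (u q - u p) = -1 := by
    rw [div_eq_iff hlt.ne']; ring
  rw [integral_eq_sub_of_hasDerivAt_of_le
    (f := fun s => arcsin ((2 * u s - u p - u q) / (u q - u p))) hpq.le (by fun_prop)
    (fun s hs => (hasDerivAt_arcsin_affine (hmaps hs)).comp s (hu' s hs))
    ((intervalIntegrable_iff_integrableOn_Ioc_of_le hpq.le).2
      (integrableOn_arcsineDensity_comp_mul_deriv hu hu' hu'_nonneg hmaps)),
    hright, hleft, arcsin_one, arcsin_neg_one]
  ring

lemma integrableOn_inv_sqrt_sub_comp_mul_deriv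
    (hu : ContinuousOn u (Icc p q)) (hu' : ∀ s ∈ Ioo p q, HasDerivAt u (u' s) s)
    (hu'_nonneg : ∀ s ∈ Ioo p q, 0 ≤ u' s) (hlt : ∀ s ∈ Ioo p q, u s < u q) :
    IntegrableOn (fun s => (√(u q - u s))⁻¹ * u' s) (Ioc p q) := by
  refine integrableOn_deriv_of_nonneg (g := fun s => -(2 * √(u q - u s))) (by fun_prop)
    (fun s hs => ?_) fun s hs => mul_nonneg (by positivity) (hu'_nonneg s hs)
  have hpos : 0 < u q - u s := sub_pos.2 (hlt s hs)
  refine ((((hu' s hs).const_sub (u q)).sqrt hpos.ne').const_mul 2).neg.congr_deriv ?_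
  have := sqrt_pos.2 hpos
  field_simp

lemma mapsTo_cosh_Ioo (hp : 0 ≤ p) : MapsTo cosh (Ioo p q) (Ioo (cosh p) (cosh q)) :=
  fun _ hs => ⟨cosh_strictMonoOn hp (hp.trans hs.1.le) hs.1,
    cosh_strictMonoOn (hp.trans hs.1.le) (hp.trans (hs.1.trans hs.2).le) hs.2⟩

lemma integrableOn_arcsineDensity_cosh_mul_sinh (hp : 0 ≤ p) :
    IntegrableOn (fun s => arcsineDensity (cosh p) (cosh q) (cosh s) * sinh s) (Ioo p q) :=
  (integrableOn_arcsineDensity_comp_mul_deriv continuous_cosh.continuousOn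
    (fun s _ => hasDerivAt_cosh s) (fun _ hs => sinh_nonneg_iff.2 (hp.trans hs.1.le))
    (mapsTo_cosh_Ioo hp)).mono_set Ioo_subset_Ioc_self

lemma integral_arcsineDensity_cosh_mul_sinh (hp : 0 ≤ p) (hpq : p < q) :
    ∫ s in Ioo p q, arcsineDensity (cosh p) (cosh q) (cosh s) * sinh s = π := by
  rw [← integral_Ioc_eq_integral_Ioo, ← integral_of_le hpq.le]
  exact integral_arcsineDensity_comp_mul_deriv hpq continuous_cosh.continuousOn
    (fun s _ => hasDerivAt_cosh s) (fun _ hs => sinh_nonneg_iff.2 (hp.trans hs.1.le))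
    (mapsTo_cosh_Ioo hp)

lemma integrableOn_inv_sqrt_cosh_sub_cosh_mul_sinh (hp : 0 ≤ p) :
    IntegrableOn (fun s => (√(cosh q - cosh s))⁻¹ * sinh s) (Ioo p q) :=
  (integrableOn_inv_sqrt_sub_comp_mul_deriv continuous_cosh.continuousOn
    (fun s _ => hasDerivAt_cosh s) (fun _ hs => sinh_nonneg_iff.2 (hp.trans hs.1.le))
    fun _ hs => (mapsTo_cosh_Ioo hp hs).2).mono_set Ioo_subset_Ioc_self

end ArcsineIntegral

section WaveKernel

open Real Set
open scoped ENNReal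

lemma rpow_neg_half (x : ℝ) : x ^ (-(1 / 2) : ℝ) = (√x)⁻¹ := by
  rw [rpow_neg_eq_inv_rpow, ← sqrt_eq_rpow, sqrt_inv]

lemma one_div_pi_mul_sqrt_two_mul {a : ℝ} (b : ℝ) (ha : 0 < a) :
    1 / (π * √2) * (π * √(b / (2 * a))) = 1 / 2 / √a * √b := by
  rw [sqrt_div' _ (by positivity), sqrt_mul zero_le_two]
  field_simp
  rw [sq_sqrt zero_le_two, mul_comm]

lemma cosh_add_sub_cosh_mul_comm (r s l : ℝ) :
    (cosh (r + s) - cosh l) * (cosh l - cosh (r - s)) =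
      (cosh (r + l) - cosh s) * (cosh s - cosh (r - l)) := by
  simp only [cosh_add, cosh_sub]
  linear_combination (cosh l ^ 2 - cosh s ^ 2) * cosh_sq r
    - sinh r ^ 2 * cosh_sq s + sinh r ^ 2 * cosh_sq l

lemma cosh_add_sub_cosh_sub (x y : ℝ) : cosh (x + y) - cosh (x - y) = 2 * sinh x * sinh y := by
  rw [cosh_add, cosh_sub]
  ring

lemma sqrt_sinh_div_le_sinh_mul_inv_sqrt {r s l : ℝ} (hr : 0 < r) (hl : 0 < l)
    (hs : s ∈ Ioo |r - l| (r + l)) :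
    √(sinh l / (2 * sinh r)) ≤ sinh l * (√(cosh (r + l) - cosh s))⁻¹ := by
  have : 0 < sinh r := sinh_pos_iff.2 hr
  have hsinh_l := sinh_pos_iff.2 hl
  obtain ⟨hcosh_sub, hcosh_add⟩ := mapsTo_cosh_Ioo (abs_nonneg _) hs
  have : 0 < cosh (r + l) - cosh s := sub_pos.2 hcosh_add
  have hcosh_le : cosh (r + l) - cosh s ≤ 2 * sinh r * sinh l := by
    rw [← cosh_add_sub_cosh_sub, ← cosh_abs (r - l)]
    linarith
  calc √(sinh l / (2 * sinh r)) = √(sinh l ^ 2 / (2 * sinh r * sinh l)) := by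
        congr 1
        field_simp
    _ = sinh l * (√(2 * sinh r * sinh l))⁻¹ := by
        rw [sqrt_div (sq_nonneg _), sqrt_sq hsinh_l.le, div_eq_mul_inv]
    _ ≤ sinh l * (√(cosh (r + l) - cosh s))⁻¹ := by gcongr

lemma abs_sub_lt_add {x y : ℝ} (hx : 0 < x) (hy : 0 < y) : |x - y| < x + y :=
  abs_lt.2 ⟨by linarith, by linarith⟩

/-- The domain of integration of `Isol`, without its boundary: the pairs `(s, l)` with `s < t`
such that `r`, `s`, `l` are the sides of a nondegenerate triangle, which forces `0 < s`. -/
def waveDomain (t r : ℝ) : Set (ℝ × ℝ) :=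
  {z | z.1 < t ∧ |r - z.1| < z.2 ∧ z.2 < r + z.1}

/-- The kernel against which `φ` is integrated in `Isol`, extended by zero outside
`waveDomain t r`. -/
noncomputable def waveKernel (t r : ℝ) : ℝ × ℝ → ℝ :=
  (waveDomain t r).indicator fun z => sinh z.2 * sinh z.1 *
    ((cosh t - cosh z.1) * (cosh (r + z.1) - cosh z.2) *
      (cosh z.2 - cosh (r - z.1))) ^ (-(1 / 2) : ℝ)

variable {t r s l : ℝ}

lemma fst_mem_Ioo_of_mem_waveDomain (h : (s, l) ∈ waveDomain t r) : s ∈ Ioo 0 t := by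
  obtain ⟨hst, habs, hl⟩ := h
  exact ⟨by linarith [le_abs_self (r - s)], hst⟩

lemma snd_mem_Icc_of_mem_waveDomain (h : (s, l) ∈ waveDomain t r) : l ∈ Icc 0 (t + r) := by
  obtain ⟨hst, habs, hl⟩ := h
  exact ⟨(abs_nonneg _).trans habs.le, by linarith⟩

lemma mem_waveDomain_iff_snd_mem_Ioo (hs : s < t) :
    (s, l) ∈ waveDomain t r ↔ l ∈ Ioo |r - s| (r + s) :=
  and_iff_right hs

lemma mem_waveDomain_iff_fst_mem_Ioo (hl : t ≤ r + l) :
    (s, l) ∈ waveDomain t r ↔ s ∈ Ioo |r - l| t := by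
  simp only [waveDomain, mem_ofPred_eq, mem_Ioo, abs_lt]
  constructor
  · rintro ⟨hst, ⟨-, hrs⟩, hlr⟩
    exact ⟨⟨by linarith, by linarith⟩, hst⟩
  · rintro ⟨⟨hls, hrl⟩, hst⟩
    exact ⟨hst, ⟨by linarith, by linarith⟩, by linarith⟩

lemma waveKernel_nonneg (z : ℝ × ℝ) : 0 ≤ waveKernel t r z := by
  refine indicator_nonneg (fun z hz => ?_) z
  have hs := sinh_nonneg_iff.2 (fst_mem_Ioo_of_mem_waveDomain hz).1.le
  have hl := sinh_nonneg_iff.2 (snd_mem_Icc_of_mem_waveDomain hz).1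
  rw [rpow_neg_half]
  positivity

lemma waveKernel_of_fst_notMem (hs : s ∉ Ioo 0 t) (l : ℝ) : waveKernel t r (s, l) = 0 :=
  indicator_of_notMem (fun h => hs (fst_mem_Ioo_of_mem_waveDomain h)) _

lemma waveKernel_of_snd_notMem (hl : l ∉ Icc 0 (t + r)) (s : ℝ) : waveKernel t r (s, l) = 0 :=
  indicator_of_notMem (fun h => hl (snd_mem_Icc_of_mem_waveDomain h)) _

lemma measurableSet_waveDomain : MeasurableSet (waveDomain t r) :=
  (measurableSet_lt measurable_fst measurable_const).inter
    ((measurableSet_lt (by fun_prop) measurable_snd).inter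
      (measurableSet_lt measurable_snd (by fun_prop)))

lemma measurable_waveKernel : Measurable (waveKernel t r) :=
  Measurable.indicator (by fun_prop) measurableSet_waveDomain

lemma waveKernel_left (hs : s ∈ Ioo 0 t) :
    (fun l => waveKernel t r (s, l)) = (Ioo |r - s| (r + s)).indicator fun l =>
      (√(cosh t - cosh s))⁻¹ * sinh s *
        (arcsineDensity (cosh |r - s|) (cosh (r + s)) (cosh l) * sinh l) := by
  funext l
  by_cases hl : l ∈ Ioo |r - s| (r + s)
  · have hcosh : 0 ≤ cosh t - cosh s := sub_nonneg.2 (mapsTo_cosh_Ioo le_rfl hs).2.le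
    rw [waveKernel, indicator_of_mem ((mem_waveDomain_iff_snd_mem_Ioo hs.2).2 hl),
      indicator_of_mem hl, rpow_neg_half, mul_assoc (_ - _), sqrt_mul hcosh, mul_inv, cosh_abs,
      arcsineDensity]
    ring
  · rw [waveKernel, indicator_of_notMem (mt (mem_waveDomain_iff_snd_mem_Ioo hs.2).1 hl),
      indicator_of_notMem hl]

lemma waveKernel_right (hl : t ≤ r + l) :
    (fun s => waveKernel t r (s, l)) = (Ioo |r - l| t).indicator fun s =>
      sinh l * (√(cosh (r + l) - cosh s))⁻¹ *
        (arcsineDensity (cosh |r - l|) (cosh t) (cosh s) * sinh s) := by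
  funext s
  by_cases hs : s ∈ Ioo |r - l| t
  · have hsrl : s ∈ Ioo 0 (r + l) := ⟨(abs_nonneg _).trans_lt hs.1, hs.2.trans_le hl⟩
    have hcosh : 0 ≤ cosh (r + l) - cosh s := sub_nonneg.2 (mapsTo_cosh_Ioo le_rfl hsrl).2.le
    rw [waveKernel, indicator_of_mem ((mem_waveDomain_iff_fst_mem_Ioo hl).2 hs),
      indicator_of_mem hs, rpow_neg_half, mul_assoc (_ - _), cosh_add_sub_cosh_mul_comm,
      mul_left_comm (_ - _), sqrt_mul hcosh, mul_inv, cosh_abs, arcsineDensity]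
    ring
  · rw [waveKernel, indicator_of_notMem (mt (mem_waveDomain_iff_fst_mem_Ioo hl).1 hs),
      indicator_of_notMem hs]

lemma integrable_waveKernel_left (hs : s ∈ Ioo 0 t) :
    Integrable fun l => waveKernel t r (s, l) := by
  rw [waveKernel_left hs, integrable_indicator_iff measurableSet_Ioo]
  exact (integrableOn_arcsineDensity_cosh_mul_sinh (abs_nonneg _)).const_mul _

lemma integral_waveKernel_left (hr : 0 < r) (hs : s ∈ Ioo 0 t) :
    ∫ l, waveKernel t r (s, l) = (√(cosh t - cosh s))⁻¹ * sinh s * π := by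
  rw [waveKernel_left hs, MeasureTheory.integral_indicator measurableSet_Ioo,
    MeasureTheory.integral_const_mul,
    integral_arcsineDensity_cosh_mul_sinh (abs_nonneg _) (abs_sub_lt_add hr hs.1)]

lemma integrable_waveKernel (hr : 0 < r) : Integrable (waveKernel t r) (volume.prod volume) := by
  refine (integrable_prod_iff measurable_waveKernel.aestronglyMeasurable).2
    ⟨ae_of_all _ fun s => ?_, ?_⟩
  · by_cases hs : s ∈ Ioo 0 t
    · exact integrable_waveKernel_left hs
    · simp only [waveKernel_of_fst_notMem hs]
      exact integrable_zero _ _ _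
  · have hmass : (fun s => ∫ l, ‖waveKernel t r (s, l)‖) =
        (Ioo 0 t).indicator fun s => (√(cosh t - cosh s))⁻¹ * sinh s * π := by
      funext s
      simp only [norm_of_nonneg (waveKernel_nonneg _)]
      by_cases hs : s ∈ Ioo 0 t
      · rw [indicator_of_mem hs, integral_waveKernel_left hr hs]
      · simp only [waveKernel_of_fst_notMem hs, MeasureTheory.integral_zero,
          indicator_of_notMem hs]
    rw [hmass, integrable_indicator_iff measurableSet_Ioo]
    exact (integrableOn_inv_sqrt_cosh_sub_cosh_mul_sinh le_rfl).mul_const π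

lemma integrable_waveKernel_right (hl : t < r + l) :
    Integrable fun s => waveKernel t r (s, l) := by
  rw [waveKernel_right hl.le, integrable_indicator_iff measurableSet_Ioo]
  refine IntegrableOn.continuousOn_mul_of_subset (K := Icc |r - l| t) ?_
    (integrableOn_arcsineDensity_cosh_mul_sinh (abs_nonneg _)) isCompact_Icc
    measurableSet_Ioo Ioo_subset_Icc_self
  refine continuousOn_const.mul (ContinuousOn.inv₀ (by fun_prop) fun s hs => ?_)
  have hs0 : 0 ≤ s := (abs_nonneg _).trans hs.1
  have hsrl : s < r + l := hs.2.trans_lt hl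
  exact (sqrt_pos.2 (sub_pos.2 (cosh_strictMonoOn hs0 (hs0.trans hsrl.le) hsrl))).ne'

lemma pi_mul_sqrt_le_integral_waveKernel_right (hr : 0 < r) (hl : l ∈ Ioo |t - r| (t + r)) :
    π * √(sinh l / (2 * sinh r)) ≤ ∫ s, waveKernel t r (s, l) := by
  obtain ⟨hl_abs, hl_add⟩ := hl
  obtain ⟨hrt, htr⟩ := abs_lt.1 hl_abs
  have hl0 : 0 < l := (abs_nonneg _).trans_lt hl_abs
  have hrl : |r - l| < t := abs_lt.2 ⟨by linarith, by linarith⟩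
  have htrl : t < r + l := by linarith
  have hint := integrable_waveKernel_right htrl
  rw [waveKernel_right htrl.le] at hint ⊢
  rw [mul_comm, MeasureTheory.integral_indicator measurableSet_Ioo,
    ← integral_arcsineDensity_cosh_mul_sinh (abs_nonneg (r - l)) hrl,
    ← MeasureTheory.integral_const_mul]
  refine setIntegral_mono_on
    ((integrableOn_arcsineDensity_cosh_mul_sinh (abs_nonneg _)).const_mul _)
    ((integrable_indicator_iff measurableSet_Ioo).1 hint) measurableSet_Ioo fun s hs => ?_
  have hsinh := sinh_nonneg_iff.2 ((abs_nonneg _).trans hs.1.le)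
  exact mul_le_mul_of_nonneg_right
    (sqrt_sinh_div_le_sinh_mul_inv_sqrt hr hl0 ⟨hs.1, hs.2.trans htrl⟩)
    (mul_nonneg (arcsineDensity_nonneg _ _ _) hsinh)

variable {φ : ℝ → ℝ}

lemma integrable_mul_waveKernel (hφ : MemLp φ ∞ (volume.restrict (Icc 0 (t + r)))) (hr : 0 < r) :
    Integrable (fun z : ℝ × ℝ => φ z.2 * waveKernel t r z) (volume.prod volume) := by
  have hext : (fun z : ℝ × ℝ => φ z.2 * waveKernel t r z) =
      fun z => (Icc 0 (t + r)).indicator φ z.2 * waveKernel t r z := by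
    funext ⟨s, l⟩
    by_cases hl : l ∈ Icc 0 (t + r)
    · rw [indicator_of_mem hl]
    · rw [waveKernel_of_snd_notMem hl, mul_zero, mul_zero]
  have hφ' := (memLp_indicator_iff_restrict measurableSet_Icc).2 hφ
  rw [hext]
  exact (integrable_waveKernel hr).bdd_mul hφ'.aestronglyMeasurable.comp_snd
    (Measure.quasiMeasurePreserving_snd.ae (ae_le_lpNorm_exponent_top hφ'))

lemma Isol_eq_integral_integral_waveKernel (ht : 0 ≤ t) (hr : 0 < r) :
    Isol t r φ = 1 / (π * √2) * ∫ s, ∫ l, φ l * waveKernel t r (s, l) := by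
  rw [Isol, integral_of_le ht, integral_Ioc_eq_integral_Ioo,
    ← setIntegral_eq_integral_of_forall_compl_eq_zero (s := Ioo 0 t)
      (f := fun s => ∫ l, φ l * waveKernel t r (s, l)) fun s hs => by
        simp only [waveKernel_of_fst_notMem hs, mul_zero, MeasureTheory.integral_zero]]
  congr 1
  refine setIntegral_congr_fun measurableSet_Ioo fun s hs => ?_
  have hmem := fun l => mem_waveDomain_iff_snd_mem_Ioo (r := r) (l := l) hs.2
  rw [integral_of_le (abs_sub_lt_add hr hs.1).le, integral_Ioc_eq_integral_Ioo,
    ← setIntegral_eq_integral_of_forall_compl_eq_zero (s := Ioo |r - s| (r + s))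
      (f := fun l => φ l * waveKernel t r (s, l)) fun l hl => by
        rw [waveKernel, indicator_of_notMem (mt (hmem l).1 hl), mul_zero]]
  refine setIntegral_congr_fun measurableSet_Ioo fun l hl => ?_
  rw [waveKernel, indicator_of_mem ((hmem l).2 hl)]
  ring

lemma Isol_eq_integral_mul_integral_waveKernel
    (hφ : MemLp φ ∞ (volume.restrict (Icc 0 (t + r)))) (ht : 0 ≤ t) (hr : 0 < r) :
    Isol t r φ = 1 / (π * √2) * ∫ l, φ l * ∫ s, waveKernel t r (s, l) := by
  rw [Isol_eq_integral_integral_waveKernel ht hr,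
    integral_integral_swap (f := fun s l => φ l * waveKernel t r (s, l))
      (integrable_mul_waveKernel hφ hr)]
  simp only [MeasureTheory.integral_const_mul]

lemma ae_nonneg_mul_integral_waveKernel
    (hφ_nonneg : 0 ≤ᵐ[volume.restrict (Icc 0 (t + r))] φ) :
    0 ≤ᵐ[volume] fun l => φ l * ∫ s, waveKernel t r (s, l) := by
  filter_upwards [(ae_restrict_iff' measurableSet_Icc).1 hφ_nonneg] with l hl_nonneg
  by_cases hl : l ∈ Icc 0 (t + r)
  · exact mul_nonneg (hl_nonneg hl) (integral_nonneg fun s => waveKernel_nonneg (s, l))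
  · simp [waveKernel_of_snd_notMem hl]

theorem solution_lower_bound_small_domain_general (ht : 0 < t) (hr : 0 < r)
    (hφ : MemLp φ ∞ (volume.restrict (Icc 0 (t + r))))
    (hφ_nonneg : 0 ≤ᵐ[volume.restrict (Icc 0 (t + r))] φ) :
    (1 / 2) / √(sinh r) * ∫ l in |t - r|..(t + r), φ l * √(sinh l) ≤ Isol t r φ := by
  have hsubset : Ioo |t - r| (t + r) ⊆ Icc 0 (t + r) := fun l hl =>
    ⟨(abs_nonneg _).trans hl.1.le, hl.2.le⟩
  have hint_kernel : Integrable fun l => φ l * ∫ s, waveKernel t r (s, l) := by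
    simpa only [MeasureTheory.integral_const_mul] using
      (integrable_mul_waveKernel hφ hr).integral_prod_right
  have hint_sqrt :
      IntegrableOn (fun l => φ l * (π * √(sinh l / (2 * sinh r)))) (Ioo |t - r| (t + r)) :=
    (IntegrableOn.mul_continuousOn (hφ.integrable le_top) (by fun_prop) isCompact_Icc).mono_set
      hsubset
  calc (1 / 2) / √(sinh r) * ∫ l in |t - r|..(t + r), φ l * √(sinh l)
      = 1 / (π * √2) * ∫ l in Ioo |t - r| (t + r), φ l * (π * √(sinh l / (2 * sinh r))) := by
        rw [integral_of_le (abs_sub_lt_add ht hr).le, integral_Ioc_eq_integral_Ioo,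
          ← MeasureTheory.integral_const_mul, ← MeasureTheory.integral_const_mul]
        congr 1
        funext l
        linear_combination -φ l * one_div_pi_mul_sqrt_two_mul (sinh l) (sinh_pos_iff.2 hr)
    _ ≤ 1 / (π * √2) * ∫ l in Ioo |t - r| (t + r), φ l * ∫ s, waveKernel t r (s, l) := by
        refine mul_le_mul_of_nonneg_left ?_ (by positivity)
        refine setIntegral_mono_on_ae hint_sqrt hint_kernel.integrableOn measurableSet_Ioo ?_
        filter_upwards [(ae_restrict_iff' measurableSet_Icc).1 hφ_nonneg] with l hl_nonneg hl
        exact mul_le_mul_of_nonneg_left (pi_mul_sqrt_le_integral_waveKernel_right hr hl)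
          (hl_nonneg (hsubset hl))
    _ ≤ 1 / (π * √2) * ∫ l, φ l * ∫ s, waveKernel t r (s, l) :=
        mul_le_mul_of_nonneg_left (setIntegral_le_integral hint_kernel
          (ae_nonneg_mul_integral_waveKernel hφ_nonneg)) (by positivity)
    _ = Isol t r φ := (Isol_eq_integral_mul_integral_waveKernel hφ ht.le hr).symm

end WaveKernel

theorem solution_lower_bound_small_domain (τ₀ : ℝ) (hτ₀ : 0 < τ₀) :
    ∃ C₀ : ℝ, 0 < C₀ ∧ C₀ ≤ 1 ∧
      ∀ φ : ℝ → ℝ, ContinuousOn φ (Set.Ici 0) → (∀ x ∈ Set.Ici (0 : ℝ), 0 ≤ φ x) →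
        ∀ t r : ℝ, 0 < t → τ₀ / 2 < r → τ₀ / 8 < |t - r| →
          Isol t r φ ≥
            (C₀ / Real.sqrt (Real.sinh r)) *
              ∫ l in |t - r|..(t + r), φ l * Real.sqrt (Real.sinh l) := by
  refine ⟨1 / 2, by norm_num, by norm_num, fun φ hφ hφ_nonneg t r ht hr _ => ?_⟩
  exact solution_lower_bound_small_domain_general ht (by linarith)
    (memLp_top_restrict_of_continuousOn_of_isCompact (hφ.mono Set.Icc_subset_Ici_self)
      isCompact_Icc)
    (ae_restrict_of_forall_mem measurableSet_Icc fun x hx => hφ_nonneg x hx.1)
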